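/- Let k be a positive integer with k = 3m² for some positive integer m. Then N₂(k) = 0 and 48·L₃(k) = N₃(k) − 6·N₂′(k) + 16. -/

import Mathlib

/-- Number of ordered pairs of positive integers `x < y` with `x² + y² = k`. -/
noncomputable def L2 (k : ℕ) : ℕ :=
  {p : ℕ × ℕ | 0 < p.1 ∧ p.1 < p.2 ∧ p.1 ^ 2 + p.2 ^ 2 = k}.ncard

/-- Number of ordered pairs of integers with `x² + y² = k`. -/
noncomputable def N2 (k : ℕ) : ℕ :=
  {p : ℤ × ℤ | p.1 ^ 2 + p.2 ^ 2 = (k : ℤ)}.ncard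

/-- Number of ordered pairs of integers with `x² + 2y² = k`. -/
noncomputable def N2' (k : ℕ) : ℕ :=
  {p : ℤ × ℤ | p.1 ^ 2 + 2 * p.2 ^ 2 = (k : ℤ)}.ncard

/-- Number of ordered triples of positive integers `x < y < z` with `x² + y² + z² = k`. -/
noncomputable def L3 (k : ℕ) : ℕ :=
  {t : ℕ × ℕ × ℕ | 0 < t.1 ∧ t.1 < t.2.1 ∧ t.2.1 < t.2.2 ∧
    t.1 ^ 2 + t.2.1 ^ 2 + t.2.2 ^ 2 = k}.ncard

/-- Number of ordered triples of integers with `x² + y² + z² = k`. -/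
noncomputable def N3 (k : ℕ) : ℕ :=
  {t : ℤ × ℤ × ℤ | t.1 ^ 2 + t.2.1 ^ 2 + t.2.2 ^ 2 = (k : ℤ)}.ncard


lemma no_two (m : ℕ) (hm : 0 < m) (a b : ℤ) : a ^ 2 + b ^ 2 ≠ 3 * (m : ℤ) ^ 2 := by
  intro h
  have h1 : 3 * m ^ 2 = a.natAbs ^ 2 + b.natAbs ^ 2 := by
    zify
    simp only [sq_abs]
    linarith
  have h2 := (Nat.eq_sq_add_sq_iff (n := 3 * m ^ 2)).1 ⟨_, _, h1⟩
  have h3 := h2 (q := 3) (by simp [Nat.prime_three]; omega) (by norm_num)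
  have : Fact (Nat.Prime 3) := ⟨Nat.prime_three⟩
  rw [padicValNat.mul (by norm_num) (by positivity), padicValNat.pow] at h3
  simp at h3
  rcases h3 with ⟨r, hr⟩
  omega

/-- Two sets corresponding under an involution have the same cardinality. -/
lemma ncard_inv {α : Type*} (S T : Set α) (f : α → α) (hf : ∀ a, f (f a) = a)
    (h1 : ∀ a ∈ S, f a ∈ T) (h2 : ∀ a ∈ T, f a ∈ S) : S.ncard = T.ncard := by
  have hi : Function.Injective f := Function.LeftInverse.injective hf
  have : T = Set.image f S := by
    ext a
    constructor
    · intro ha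
      exact ⟨f a, h2 a ha, hf a⟩
    · rintro ⟨b, hb, rfl⟩
      exact h1 b hb
  rw [this, Set.ncard_image_of_injective _ hi]

lemma ncard_split {α : Type*} (S A B : Set α) (hS : S.Finite)
    (h : ∀ a, a ∈ S ↔ a ∈ A ∨ a ∈ B) (hd : ∀ a, a ∈ A → a ∈ B → False) :
    S.ncard = A.ncard + B.ncard := by
  have e : S = A ∪ B := Set.ext h
  subst e
  exact Set.ncard_union_eq (Set.disjoint_left.2 hd) (hS.subset Set.subset_union_left)
    (hS.subset Set.subset_union_right)

lemma ncard_half {α : Type*} (S A : Set α) (hS : S.Finite) (f : α → α)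
    (hf : ∀ a, f (f a) = a) (h : ∀ a, a ∈ S ↔ a ∈ A ∨ f a ∈ A)
    (hd : ∀ a, a ∈ A → f a ∈ A → False) : S.ncard = 2 * A.ncard := by
  rw [ncard_split S A {a | f a ∈ A} hS h hd,
    ncard_inv {a | f a ∈ A} A f hf (fun a ha => ha) (fun a ha => by simpa [hf] using ha)]
  ring

lemma fin3 (k : ℕ) : {t : ℤ × ℤ × ℤ | t.1 ^ 2 + t.2.1 ^ 2 + t.2.2 ^ 2 = (k : ℤ)}.Finite := by
  apply ((Set.finite_Icc (-(k : ℤ)) k).prod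
    ((Set.finite_Icc (-(k : ℤ)) k).prod (Set.finite_Icc (-(k : ℤ)) k))).subset
  rintro ⟨x, y, z⟩ h
  simp only [Set.mem_ofPred_eq, Set.mem_prod, Set.mem_Icc] at *
  refine ⟨⟨?_, ?_⟩, ⟨?_, ?_⟩, ?_, ?_⟩ <;>
    nlinarith [sq_nonneg x, sq_nonneg y, sq_nonneg z, Int.le_self_sq x, Int.le_self_sq y,
      Int.le_self_sq z, Int.le_self_sq (-x), Int.le_self_sq (-y), Int.le_self_sq (-z)]

lemma fin2 (k : ℕ) : {t : ℤ × ℤ | t.1 ^ 2 + 2 * t.2 ^ 2 = (k : ℤ)}.Finite := by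
  apply ((Set.finite_Icc (-(k : ℤ)) k).prod (Set.finite_Icc (-(k : ℤ)) k)).subset
  rintro ⟨x, y⟩ h
  simp only [Set.mem_ofPred_eq, Set.mem_prod, Set.mem_Icc] at *
  refine ⟨⟨?_, ?_⟩, ?_, ?_⟩ <;>
    nlinarith [sq_nonneg x, sq_nonneg y, Int.le_self_sq x, Int.le_self_sq y,
      Int.le_self_sq (-x), Int.le_self_sq (-y)]

/-- positive integer triples with a side condition -/
def PT (k : ℕ) (p : ℤ → ℤ → ℤ → Prop) : Set (ℤ × ℤ × ℤ) :=
  {t | t.1 ^ 2 + t.2.1 ^ 2 + t.2.2 ^ 2 = (k : ℤ) ∧ 0 < t.1 ∧ 0 < t.2.1 ∧ 0 < t.2.2 ∧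
    p t.1 t.2.1 t.2.2}

lemma PT_fin (k : ℕ) (p : ℤ → ℤ → ℤ → Prop) : (PT k p).Finite :=
  (fin3 k).subset (fun _ h => h.1)

lemma PT_split (k : ℕ) (p q r : ℤ → ℤ → ℤ → Prop) (h : ∀ x y z, p x y z ↔ q x y z ∨ r x y z)
    (hd : ∀ x y z, q x y z → r x y z → False) :
    (PT k p).ncard = (PT k q).ncard + (PT k r).ncard := by
  apply ncard_split _ _ _ (PT_fin k p)
  · rintro ⟨x, y, z⟩
    simp only [PT, Set.mem_ofPred_eq, h]
    tauto
  · rintro ⟨x, y, z⟩ h1 h2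
    exact hd x y z h1.2.2.2.2 h2.2.2.2.2

lemma PT_swap12 (k : ℕ) (p q : ℤ → ℤ → ℤ → Prop) (h : ∀ x y z, p x y z ↔ q y x z) :
    (PT k p).ncard = (PT k q).ncard := by
  apply ncard_inv _ _ (fun t => (t.2.1, t.1, t.2.2)) (fun _ => rfl)
  · rintro ⟨x, y, z⟩ ⟨h1, h2, h3, h4, h5⟩
    exact ⟨by simp only at *; linarith, h3, h2, h4, (h _ _ _).1 h5⟩
  · rintro ⟨x, y, z⟩ ⟨h1, h2, h3, h4, h5⟩
    exact ⟨by simp only at *; linarith, h3, h2, h4, (h _ _ _).2 h5⟩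

lemma PT_swap23 (k : ℕ) (p q : ℤ → ℤ → ℤ → Prop) (h : ∀ x y z, p x y z ↔ q x z y) :
    (PT k p).ncard = (PT k q).ncard := by
  apply ncard_inv _ _ (fun t => (t.1, t.2.2, t.2.1)) (fun _ => rfl)
  · rintro ⟨x, y, z⟩ ⟨h1, h2, h3, h4, h5⟩
    exact ⟨by simp only at *; linarith, h2, h4, h3, (h _ _ _).1 h5⟩
  · rintro ⟨x, y, z⟩ ⟨h1, h2, h3, h4, h5⟩
    exact ⟨by simp only at *; linarith, h2, h4, h3, (h _ _ _).2 h5⟩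

lemma L3_eq (k : ℕ) : L3 k = (PT k (fun x y z => x < y ∧ y < z)).ncard := by
  unfold L3
  have hi : Function.Injective
      (fun t : ℕ × ℕ × ℕ => ((t.1 : ℤ), (t.2.1 : ℤ), (t.2.2 : ℤ))) := by
    rintro ⟨a, b, c⟩ ⟨d, e, f⟩ h
    simpa using h
  rw [← Set.ncard_image_of_injective _ hi]
  congr 1
  ext ⟨x, y, z⟩
  simp only [Set.mem_image, PT, Set.mem_ofPred_eq, Prod.exists, Prod.mk.injEq]
  constructor
  · rintro ⟨a, b, c, ⟨h1, h2, h3, h4⟩, rfl, rfl, rfl⟩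
    refine ⟨by exact_mod_cast h4, ?_, ?_, ?_, ?_, ?_⟩ <;> omega
  · rintro ⟨h1, h2, h3, h4, h5, h6⟩
    lift x to ℕ using h2.le
    lift y to ℕ using h3.le
    lift z to ℕ using h4.le
    exact ⟨x, y, z, ⟨by omega, by omega, by omega, by exact_mod_cast h1⟩, rfl, rfl, rfl⟩

lemma N3_eq (k m : ℕ) (hm : 0 < m) (hk : k = 3 * m ^ 2) :
    N3 k = 8 * (PT k (fun _ _ _ => True)).ncard := by
  have hc : (k : ℤ) = 3 * (m : ℤ) ^ 2 := by rw [hk]; push_cast; ring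
  have h0 : ∀ x y z : ℤ, x ^ 2 + y ^ 2 + z ^ 2 = k → x ≠ 0 ∧ y ≠ 0 ∧ z ≠ 0 := by
    intro x y z h
    refine ⟨?_, ?_, ?_⟩ <;> rintro rfl
    · exact no_two m hm y z (by linarith)
    · exact no_two m hm x z (by linarith)
    · exact no_two m hm x y (by linarith)
  let A : Set (ℤ × ℤ × ℤ) := {t | t.1 ^ 2 + t.2.1 ^ 2 + t.2.2 ^ 2 = (k : ℤ) ∧ 0 < t.1}
  let B : Set (ℤ × ℤ × ℤ) :=
    {t | t.1 ^ 2 + t.2.1 ^ 2 + t.2.2 ^ 2 = (k : ℤ) ∧ 0 < t.1 ∧ 0 < t.2.1}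
  have e1 : N3 k = 2 * A.ncard := by
    apply ncard_half _ _ (fin3 k) (fun t => (-t.1, t.2.1, t.2.2)) (fun _ => by simp)
    · rintro ⟨x, y, z⟩
      have := h0 x y z
      simp only [A, Set.mem_ofPred_eq, neg_sq]
      grind
    · rintro ⟨x, y, z⟩
      simp only [A, Set.mem_ofPred_eq, neg_sq]
      grind
  have e2 : A.ncard = 2 * B.ncard := by
    apply ncard_half _ _ ((fin3 k).subset (fun _ h => h.1)) (fun t => (t.1, -t.2.1, t.2.2))
      (fun _ => by simp)
    · rintro ⟨x, y, z⟩
      have := h0 x y z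
      simp only [A, B, Set.mem_ofPred_eq, neg_sq]
      grind
    · rintro ⟨x, y, z⟩
      simp only [B, Set.mem_ofPred_eq, neg_sq]
      grind
  have e3 : B.ncard = 2 * (PT k (fun _ _ _ => True)).ncard := by
    apply ncard_half _ _ ((fin3 k).subset (fun _ h => h.1)) (fun t => (t.1, t.2.1, -t.2.2))
      (fun _ => by simp)
    · rintro ⟨x, y, z⟩
      have := h0 x y z
      simp only [B, PT, Set.mem_ofPred_eq, neg_sq]
      grind
    · rintro ⟨x, y, z⟩
      simp only [PT, Set.mem_ofPred_eq, neg_sq]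
      grind
  omega

lemma N2'_eq (k m : ℕ) (hm : 0 < m) (hk : k = 3 * m ^ 2) :
    N2' k = 4 * (PT k (fun x y _ => x = y)).ncard := by
  have hc : (k : ℤ) = 3 * (m : ℤ) ^ 2 := by rw [hk]; push_cast; ring
  have h0 : ∀ x y : ℤ, x ^ 2 + 2 * y ^ 2 = k → x ≠ 0 ∧ y ≠ 0 := by
    intro x y h
    refine ⟨?_, ?_⟩ <;> rintro rfl
    · exact no_two m hm y y (by linarith)
    · exact no_two m hm x 0 (by linarith)
  let A : Set (ℤ × ℤ) := {t | t.1 ^ 2 + 2 * t.2 ^ 2 = (k : ℤ) ∧ 0 < t.1}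
  let B : Set (ℤ × ℤ) := {t | t.1 ^ 2 + 2 * t.2 ^ 2 = (k : ℤ) ∧ 0 < t.1 ∧ 0 < t.2}
  have e1 : N2' k = 2 * A.ncard := by
    apply ncard_half _ _ (fin2 k) (fun t => (-t.1, t.2)) (fun _ => by simp)
    · rintro ⟨x, y⟩
      have := h0 x y
      simp only [A, Set.mem_ofPred_eq, neg_sq]
      grind
    · rintro ⟨x, y⟩
      simp only [A, Set.mem_ofPred_eq, neg_sq]
      grind
  have e2 : A.ncard = 2 * B.ncard := by
    apply ncard_half _ _ ((fin2 k).subset (fun _ h => h.1)) (fun t => (t.1, -t.2))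
      (fun _ => by simp)
    · rintro ⟨x, y⟩
      have := h0 x y
      simp only [A, B, Set.mem_ofPred_eq, neg_sq]
      grind
    · rintro ⟨x, y⟩
      simp only [B, Set.mem_ofPred_eq, neg_sq]
      grind
  have e3 : B.ncard = (PT k (fun x y _ => x = y)).ncard := by
    have hi : Function.Injective (fun t : ℤ × ℤ => (t.2, t.2, t.1)) := by
      rintro ⟨a, b⟩ ⟨c, d⟩ h
      simp at h
      simp [h]
    rw [← Set.ncard_image_of_injective _ hi]
    congr 1
    ext ⟨x, y, z⟩
    simp only [Set.mem_image, PT, B, Set.mem_ofPred_eq, Prod.exists, Prod.mk.injEq]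
    constructor
    · rintro ⟨a, b, ⟨h1, h2, h3⟩, rfl, rfl, rfl⟩
      exact ⟨by linarith, h3, h3, h2, rfl⟩
    · rintro ⟨h1, h2, h3, h4, rfl⟩
      exact ⟨z, x, ⟨by linarith, h4, h2⟩, rfl, rfl, rfl⟩
  omega

lemma T_eq (k m : ℕ) (hm : 0 < m) (hk : k = 3 * m ^ 2) :
    (PT k (fun x y z => x = y ∧ z = x)).ncard = 1 := by
  have hc : (k : ℤ) = 3 * (m : ℤ) ^ 2 := by rw [hk]; push_cast; ring
  rw [Set.ncard_eq_one]
  refine ⟨((m : ℤ), (m : ℤ), (m : ℤ)), ?_⟩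
  ext ⟨x, y, z⟩
  simp only [PT, Set.mem_ofPred_eq, Set.mem_singleton_iff, Prod.mk.injEq]
  constructor
  · rintro ⟨h1, h2, h3, h4, rfl, rfl⟩
    have : z = (m : ℤ) := by
      rw [← sq_eq_sq₀ h2.le (by positivity)]
      linarith
    exact ⟨this, this, this⟩
  · rintro ⟨rfl, rfl, rfl⟩
    have : (0 : ℤ) < m := by exact_mod_cast hm
    exact ⟨by linarith, this, this, this, rfl, rfl⟩

theorem fortyeight_L3_thrice_square (k : ℕ) (hk : 0 < k)
    (h : ∃ m : ℕ, 0 < m ∧ k = 3 * m ^ 2) :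
    N2 k = 0 ∧ 48 * L3 k + 6 * N2' k = N3 k + 16 := by
  obtain ⟨m, hm, hkm⟩ := h
  have hc : (k : ℤ) = 3 * (m : ℤ) ^ 2 := by rw [hkm]; push_cast; ring
  constructor
  · have : {p : ℤ × ℤ | p.1 ^ 2 + p.2 ^ 2 = (k : ℤ)} = ∅ := by
      ext ⟨x, y⟩
      simp only [Set.mem_ofPred_eq, Set.mem_empty_iff_false, iff_false, hc]
      exact no_two m hm x y
    rw [N2, this, Set.ncard_empty]
  · rw [L3_eq, N3_eq k m hm hkm, N2'_eq k m hm hkm]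
    have hT := T_eq k m hm hkm
    have a1 := PT_split k (fun _ _ _ => True) (fun x y _ => x = y) (fun x y _ => x ≠ y)
      (by clear * -; first | omega | grind) (by clear * -; first | (intros; omega) | grind)
    have a2 := PT_split k (fun x y _ => x ≠ y) (fun x y _ => x < y) (fun x y _ => y < x)
      (by clear * -; first | omega | grind) (by clear * -; first | (intros; omega) | grind)
    have a3 := PT_swap12 k (fun x y _ => y < x) (fun x y _ => x < y) (by clear * -; first | omega | grind)
    have a4 := PT_split k (fun x y _ => x < y) (fun x y z => x < y ∧ z = x)
      (fun x y z => x < y ∧ z ≠ x) (by clear * -; first | omega | grind) (by clear * -; first | (intros; omega) | grind)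
    have a5 := PT_split k (fun x y z => x < y ∧ z ≠ x) (fun x y z => x < y ∧ z = y)
      (fun x y z => x < y ∧ z ≠ x ∧ z ≠ y) (by clear * -; first | omega | grind) (by clear * -; first | (intros; omega) | grind)
    have a6 := PT_split k (fun x y z => x < y ∧ z ≠ x ∧ z ≠ y) (fun x y z => x < y ∧ y < z)
      (fun x y z => x < y ∧ z ≠ x ∧ z < y) (by clear * -; first | omega | grind) (by clear * -; first | (intros; omega) | grind)
    have a7 := PT_split k (fun x y z => x < y ∧ z ≠ x ∧ z < y) (fun x y z => x < z ∧ z < y)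
      (fun x y z => z < x ∧ x < y) (by clear * -; first | omega | grind) (by clear * -; first | (intros; omega) | grind)
    have a8 := PT_swap23 k (fun x y z => x < z ∧ z < y) (fun x y z => x < y ∧ y < z) (by clear * -; first | omega | grind)
    have a9 := PT_swap23 k (fun x y z => z < x ∧ x < y) (fun x y z => y < x ∧ x < z) (by clear * -; first | omega | grind)
    have a10 := PT_swap12 k (fun x y z => y < x ∧ x < z) (fun x y z => x < y ∧ y < z) (by clear * -; first | omega | grind)
    have b1 := PT_split k (fun x y _ => x = y) (fun x y z => x = y ∧ z = x)
      (fun x y z => x = y ∧ z ≠ x) (by clear * -; first | omega | grind) (by clear * -; first | (intros; omega) | grind)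
    have b2 := PT_split k (fun x y z => x = y ∧ z ≠ x) (fun x y z => x = y ∧ x < z)
      (fun x y z => x = y ∧ z < x) (by clear * -; first | omega | grind) (by clear * -; first | (intros; omega) | grind)
    have b3 := PT_swap23 k (fun x y z => x = y ∧ x < z) (fun x y z => x < y ∧ z = x) (by clear * -; first | omega | grind)
    have b4 := PT_swap23 k (fun x y z => x = y ∧ z < x) (fun x y z => y < x ∧ z = x) (by clear * -; first | omega | grind)
    have b5 := PT_swap12 k (fun x y z => y < x ∧ z = x) (fun x y z => x < y ∧ z = y) (by clear * -; first | omega | grind)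
    omega
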